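/- arXiv:2409.17215 — 7 statements merged into one kernel-verified Lean document; each statement's English description precedes it below -/
import Mathlib

section
/- (Dual unitarity.) Let A be a Hopf algebra over ℂ with antipode S satisfying S∘S = id, equipped with a *-structure (a conjugate-linear involution * with (x·y)* = y*·x*). Let (v_{ij}) be a d_v-dimensional corepresentation of A with S(v_{ij}) = (v_{ji})*, and let ρ be a d_ρ-dimensional representation of A with ρ(x*) = ρ(x)^† for all x ∈ A. Then the spatially-reshuffled matrix Ũ with entries Ũ_{(i,b),(a,j)} := ρ(v_{ij})_{ab} (rows indexed by pairs (i,b), columns by pairs (a,j)) is unitary; equivalently, Σ_{k=1}^{d_v} Σ_{c=1}^{d_ρ} ρ(v_{kj})_{ac} · conj(ρ(v_{ki})_{bc}) = δ_{ij}·δ_{ab} for all i,j,a,b. -/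
open scoped TensorProduct
open Matrix

/-- The spatially-reshuffled gate `Ũ` with entries `Ũ_{(i,b),(a,j)} = ρ(v_{ij})_{ab}`,
rows indexed by pairs `(i, b)` and columns by pairs `(a, j)`. -/
noncomputable def dualGateMatrix {A : Type*} [Ring A] [Algebra ℂ A] {dρ dv : ℕ}
    (ρ : A →ₐ[ℂ] Matrix (Fin dρ) (Fin dρ) ℂ) (v : Fin dv → Fin dv → A) :
    Matrix (Fin dv × Fin dρ) (Fin dρ × Fin dv) ℂ :=
  Matrix.of fun p q => ρ (v p.1 q.2) q.1 p.2

/-- **Dual unitarity.** Let `A` be a Hopf algebra over `ℂ` with involutive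
antipode (`S ∘ S = id`) and a `*`-structure; let `(v_{ij})` be a corepresentation with
`S(v_{ij}) = (v_{ji})*` and `ρ` a `*`-representation (`ρ(x*) = ρ(x)ᴴ`). Then the
reshuffled matrix `Ũ_{(i,b),(a,j)} = ρ(v_{ij})_{ab}` is unitary; equivalently,
`Σ_k Σ_c ρ(v_{kj})_{ac} · conj(ρ(v_{ki})_{bc}) = δ_{ij} δ_{ab}` for all `i, j, a, b`. -/
theorem hopf_gate_dual_unitary
    {A : Type*} [Ring A] [HopfAlgebra ℂ A] [StarRing A] [StarModule ℂ A]
    (hS2 : ∀ x : A, HopfAlgebra.antipode (R := ℂ) (HopfAlgebra.antipode (R := ℂ) x) = x)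
    {dρ dv : ℕ} (ρ : A →ₐ[ℂ] Matrix (Fin dρ) (Fin dρ) ℂ)
    (hρstar : ∀ x : A, ρ (star x) = (ρ x)ᴴ)
    (v : Fin dv → Fin dv → A)
    (hvΔ : ∀ i j, Coalgebra.comul (R := ℂ) (v i j) = ∑ k, v i k ⊗ₜ[ℂ] v k j)
    (hvε : ∀ i j, Coalgebra.counit (R := ℂ) (v i j) = if i = j then (1 : ℂ) else 0)
    (hvS : ∀ i j, HopfAlgebra.antipode (R := ℂ) (v i j) = star (v j i)) :
    ((dualGateMatrix ρ v)ᴴ * dualGateMatrix ρ v = 1 ∧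
      dualGateMatrix ρ v * (dualGateMatrix ρ v)ᴴ = 1) ∧
    (∀ (i j : Fin dv) (a b : Fin dρ),
      ∑ k, ∑ c, ρ (v k j) a c * star (ρ (v k i) b c) =
        (if i = j then (1 : ℂ) else 0) * (if a = b then 1 else 0)) := by
  have hA : ∀ i j : Fin dv, ∑ k, v k j * star (v k i) = if i = j then (1 : A) else 0 := by
    intro i j
    have h1 := HopfAlgebra.mul_antipode_lTensor_comul_apply (R := ℂ) (v i j)
    rw [hvΔ, hvε] at h1
    simp only [map_sum, LinearMap.lTensor_tmul, LinearMap.mul'_apply] at h1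
    have h2 := congrArg (HopfAlgebra.antipode (R := ℂ)) h1
    simp only [map_sum, HopfAlgebra.antipode_mul_antidistrib, hS2] at h2
    simp only [hvS i] at h2
    rw [h2]
    split_ifs <;> simp
  have hM : ∀ (i j : Fin dv) (a b : Fin dρ),
      ∑ k, ∑ c, ρ (v k j) a c * star (ρ (v k i) b c) =
        (if i = j then (1 : ℂ) else 0) * (if a = b then 1 else 0) := by
    intro i j a b
    have h := congrFun (congrFun (congrArg ρ (hA i j)) a) b
    simp only [map_sum, map_mul, hρstar, Matrix.sum_apply, Matrix.mul_apply,
      Matrix.conjTranspose_apply] at h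
    rw [h]
    split_ifs <;> simp_all [Matrix.one_apply]
  have hU : (dualGateMatrix ρ v)ᴴ * dualGateMatrix ρ v = 1 := by
    ext ⟨a, i⟩ ⟨b, j⟩
    have h := hM i j b a
    simp only [Matrix.mul_apply, Matrix.conjTranspose_apply, dualGateMatrix, Matrix.of_apply,
      Fintype.sum_prod_type, Matrix.one_apply, Prod.mk.injEq]
    simp only [mul_comm (star _)]
    rw [h]
    by_cases h1 : i = j <;> by_cases h2 : a = b <;> simp [h1, h2, eq_comm]
  exact ⟨⟨hU, (Matrix.mul_eq_one_comm_of_equiv (Equiv.prodComm _ _)).mp hU⟩, hM⟩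
end

section
/- (MPO representation of the triangular circuit network, Eq. (3) of the paper.) Let A be a bialgebra over ℂ, ρ a d_ρ-dimensional representation, (v_{ij}) a d_v-dimensional corepresentation, and define the gate entries U^{(i,a)}_{(b,j)} := ρ(v_{ij})_{ab}. Define linear maps G^v_{ij}, G^ρ_{ab} : A → A by G^v_{ij}(x) := x·v_{ij} and G^ρ_{ab}(x) := Σ x₍₁₎ · ρ(x₍₂₎)_{ab}. Define the triangular network recursively: [U△^{(1)}]^{(i),(a)}_{(b,j)} := U^{(i,a)}_{(b,j)}, and for n ≥ 2, [U△^{(n)}]^{(i₁,…,iₙ),(a₁,…,aₙ)}_{(b₁,j₁,…,bₙ,jₙ)} := Σ over i'₂,…,i'ₙ and a'₁,…,a'_{n−1} of [U△^{(n−1)}]^{(i₂,…,iₙ),(a₁,…,a_{n−1})}_{(a'₁,i'₂, a'₂,i'₃, …, a'_{n−1},i'ₙ)} · Π_{m=1}^{n} U^{(i'_m, a'_m)}_{(b_m, j_m)}, where i'₁ := i₁ and a'ₙ := aₙ. Then for every n ≥ 1 and all index tuples, [U△^{(n)}]^{(i₁,…,iₙ),(a₁,…,aₙ)}_{(b₁,j₁,…,bₙ,jₙ)}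 = ε( G^ρ_{a₁b₁}( G^v_{i₁j₁}( G^ρ_{a₂b₂}( ⋯ G^ρ_{aₙbₙ}( G^v_{iₙjₙ}(1) ) ⋯ ))))—i.e., the triangular 2D tensor network equals a matrix product operator with bond space A. -/
open scoped TensorProduct

/-- The linear map picking out the `(a, b)` entry of a matrix. -/
def entryLM {d : ℕ} (a b : Fin d) : Matrix (Fin d) (Fin d) ℂ →ₗ[ℂ] ℂ where
  toFun M := M a b
  map_add' _ _ := rfl
  map_smul' _ _ := rfl

/-- The Sweedler contraction `A ⊗ A →ₗ[ℂ] A` sending `y ⊗ z` to `ρ(z)_{a b} • y`. -/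
noncomputable def sweedlerContract {A : Type*} [Ring A] [Algebra ℂ A] {d : ℕ}
    (ρ : A →ₐ[ℂ] Matrix (Fin d) (Fin d) ℂ) (a b : Fin d) :
    A ⊗[ℂ] A →ₗ[ℂ] A :=
  (TensorProduct.rid ℂ A).toLinearMap ∘ₗ
    TensorProduct.map LinearMap.id ((entryLM a b) ∘ₗ ρ.toLinearMap)

/-- `G^ρ_{ab}(x) = Σ x₍₁₎ · ρ(x₍₂₎)_{ab}`. -/
noncomputable def Grho {A : Type*} [Ring A] [Bialgebra ℂ A] {dρ : ℕ}
    (ρ : A →ₐ[ℂ] Matrix (Fin dρ) (Fin dρ) ℂ) (a b : Fin dρ) (x : A) : A :=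
  sweedlerContract ρ a b (Coalgebra.comul (R := ℂ) x)

/-- `G^v_{ij}(x) = x · v_{ij}`. -/
def Gv {A : Type*} [Ring A] {dv : ℕ} (v : Fin dv → Fin dv → A) (i j : Fin dv) (x : A) : A :=
  x * v i j

/-- The entries `U^{(i,a)}_{(b,j)} = ρ(v_{ij})_{ab}` of the elementary gate. -/
noncomputable def gateEntry {A : Type*} [Ring A] [Bialgebra ℂ A] {dρ dv : ℕ}
    (ρ : A →ₐ[ℂ] Matrix (Fin dρ) (Fin dρ) ℂ) (v : Fin dv → Fin dv → A)
    (i : Fin dv) (a b : Fin dρ) (j : Fin dv) : ℂ :=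
  ρ (v i j) a b

/-- The triangular tensor network `U△^{(n+1)}`, defined recursively:
`U△^{(1)} = U`, and `U△^{(n+1)}` is obtained from `U△^{(n)}` by contracting a bottom row
of `n+1` elementary gates, with `i'₁ = i₁` and `a'_{n+1} = a_{n+1}`. -/
noncomputable def triangleNetwork {A : Type*} [Ring A] [Bialgebra ℂ A] {dρ dv : ℕ}
    (ρ : A →ₐ[ℂ] Matrix (Fin dρ) (Fin dρ) ℂ) (v : Fin dv → Fin dv → A) :
    (n : ℕ) → (Fin (n + 1) → Fin dv) → (Fin (n + 1) → Fin dρ) →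
      (Fin (n + 1) → Fin dρ) → (Fin (n + 1) → Fin dv) → ℂ
  | 0, i, a, b, j => gateEntry ρ v (i 0) (a 0) (b 0) (j 0)
  | (n + 1), i, a, b, j =>
      ∑ i' : Fin (n + 1) → Fin dv, ∑ a' : Fin (n + 1) → Fin dρ,
        triangleNetwork ρ v n (Fin.tail i) (Fin.init a) a' i' *
          ∏ m : Fin (n + 2),
            gateEntry ρ v ((Fin.cons (i 0) i' : Fin (n + 2) → Fin dv) m)
              ((Fin.snoc a' (a (Fin.last (n + 1))) : Fin (n + 2) → Fin dρ) m)
              (b m) (j m)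

/-- The matrix product operator `ε(G^ρ_{a₁b₁}(G^v_{i₁j₁}(⋯ G^ρ_{aₙbₙ}(G^v_{iₙjₙ}(1))⋯)))`:
the element of `A` obtained by alternately applying `G^v` and `G^ρ` to `1`. -/
noncomputable def mpoWord {A : Type*} [Ring A] [Bialgebra ℂ A] {dρ dv : ℕ}
    (ρ : A →ₐ[ℂ] Matrix (Fin dρ) (Fin dρ) ℂ) (v : Fin dv → Fin dv → A) :
    (n : ℕ) → (Fin n → Fin dv) → (Fin n → Fin dρ) → (Fin n → Fin dρ) → (Fin n → Fin dv) → A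
  | 0, _, _, _, _ => 1
  | (n + 1), i, a, b, j =>
      Grho ρ (a 0) (b 0) (Gv v (i 0) (j 0)
        (mpoWord ρ v n (Fin.tail i) (Fin.tail a) (Fin.tail b) (Fin.tail j)))

theorem sweedlerContract_tmul {A : Type*} [Ring A] [Algebra ℂ A] {d : ℕ}
    (ρ : A →ₐ[ℂ] Matrix (Fin d) (Fin d) ℂ) (a b : Fin d) (y z : A) :
    sweedlerContract ρ a b (y ⊗ₜ[ℂ] z) = ρ z a b • y := by
  simp only [sweedlerContract, LinearMap.comp_apply, TensorProduct.map_tmul, LinearMap.id_apply,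
    LinearEquiv.coe_coe, TensorProduct.rid_tmul]
  rfl

theorem Grho_sum_smul {A : Type*} [Ring A] [Bialgebra ℂ A] {dρ : ℕ}
    (ρ : A →ₐ[ℂ] Matrix (Fin dρ) (Fin dρ) ℂ) (a b : Fin dρ) {ι : Type*} (s : Finset ι)
    (c : ι → ℂ) (x : ι → A) :
    Grho ρ a b (∑ t ∈ s, c t • x t) = ∑ t ∈ s, c t • Grho ρ a b (x t) := by
  simp [Grho, map_sum]

theorem sweedlerContract_mul {A : Type*} [Ring A] [Algebra ℂ A] {d : ℕ}
    (ρ : A →ₐ[ℂ] Matrix (Fin d) (Fin d) ℂ) (a b : Fin d) (X : A ⊗[ℂ] A) (y z : A) :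
    sweedlerContract ρ a b (X * (y ⊗ₜ[ℂ] z)) =
      ∑ c, ρ z c b • (sweedlerContract ρ a c X * y) := by
  induction X using TensorProduct.induction_on with
  | zero => simp
  | tmul p q =>
    simp only [Algebra.TensorProduct.tmul_mul_tmul, sweedlerContract_tmul, map_mul,
      Matrix.mul_apply, Finset.sum_smul, smul_mul_assoc, smul_smul]
    exact Finset.sum_congr rfl fun c _ => by rw [mul_comm]
  | add X Y hX hY =>
    simp only [add_mul, map_add, hX, hY, smul_add, Finset.sum_add_distrib]

theorem Grho_Gv {A : Type*} [Ring A] [Bialgebra ℂ A] {dρ dv : ℕ}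
    (ρ : A →ₐ[ℂ] Matrix (Fin dρ) (Fin dρ) ℂ) (v : Fin dv → Fin dv → A)
    (hvΔ : ∀ i j, Coalgebra.comul (R := ℂ) (v i j) = ∑ k, v i k ⊗ₜ[ℂ] v k j)
    (a b : Fin dρ) (i j : Fin dv) (x : A) :
    Grho ρ a b (Gv v i j x) =
      ∑ k, ∑ c, gateEntry ρ v k c b j • (Grho ρ a c x * v i k) := by
  simp only [Grho, Gv, Bialgebra.comul_mul, hvΔ, Finset.mul_sum, map_sum,
    sweedlerContract_mul, gateEntry]

theorem Grho_one {A : Type*} [Ring A] [Bialgebra ℂ A] {dρ : ℕ}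
    (ρ : A →ₐ[ℂ] Matrix (Fin dρ) (Fin dρ) ℂ) (a b : Fin dρ) :
    Grho ρ a b (1 : A) = if a = b then 1 else 0 := by
  rw [Grho, Bialgebra.comul_one, Algebra.TensorProduct.one_def, sweedlerContract_tmul, map_one,
    Matrix.one_apply]
  split_ifs <;> simp

theorem sum_fin_cons {n d : ℕ} {M : Type*} [AddCommMonoid M] (f : (Fin (n + 1) → Fin d) → M) :
    ∑ x, f x = ∑ c, ∑ y : Fin n → Fin d, f (Fin.cons c y) := by
  rw [← Fintype.sum_prod_type']
  exact (Fintype.sum_equiv (Fin.consEquiv fun _ => Fin d) _ _ fun _ => rfl).symm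

/-- Peeling the bottom row of gates off the word. -/
theorem mpoWord_peel {A : Type*} [Ring A] [Bialgebra ℂ A] {dρ dv : ℕ}
    (ρ : A →ₐ[ℂ] Matrix (Fin dρ) (Fin dρ) ℂ) (v : Fin dv → Fin dv → A)
    (hvΔ : ∀ i j, Coalgebra.comul (R := ℂ) (v i j) = ∑ k, v i k ⊗ₜ[ℂ] v k j)
    (n : ℕ) (i : Fin (n + 1) → Fin dv) (a : Fin (n + 1) → Fin dρ)
    (b : Fin (n + 1) → Fin dρ) (j : Fin (n + 1) → Fin dv) :
    mpoWord ρ v (n + 1) i a b j =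
      ∑ k : Fin dv, ∑ i' : Fin n → Fin dv, ∑ a' : Fin n → Fin dρ,
        (∏ m : Fin (n + 1), gateEntry ρ v ((Fin.cons k i' : Fin (n + 1) → Fin dv) m)
            ((Fin.snoc a' (a (Fin.last n)) : Fin (n + 1) → Fin dρ) m) (b m) (j m)) •
          (mpoWord ρ v n (Fin.tail i) (Fin.init a) a' i' * v (i 0) k) := by
  induction n with
  | zero =>
    rw [mpoWord, Grho_Gv ρ v hvΔ]
    simp [mpoWord, Grho_one, Fin.snoc]
  | succ n ih =>
    rw [mpoWord, Grho_Gv ρ v hvΔ]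
    refine Finset.sum_congr rfl fun k _ => ?_
    have hG : ∀ c, Grho ρ (a 0) c (mpoWord ρ v (n + 1) (Fin.tail i) (Fin.tail a) (Fin.tail b)
          (Fin.tail j)) =
        ∑ k' : Fin dv, ∑ i' : Fin n → Fin dv, ∑ a' : Fin n → Fin dρ,
        (∏ m : Fin (n + 1), gateEntry ρ v ((Fin.cons k' i' : Fin (n + 1) → Fin dv) m)
            ((Fin.snoc a' (a (Fin.last (n + 1))) : Fin (n + 1) → Fin dρ) m)
              (b m.succ) (j m.succ)) •
          mpoWord ρ v (n + 1) (Fin.tail i) (Fin.init a) (Fin.cons c a') (Fin.cons k' i') := by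
      intro c
      rw [ih]
      simp only [← Fintype.sum_prod_type']
      rw [Grho_sum_smul]
      rfl
    simp only [hG]
    rw [sum_fin_cons]
    simp only [sum_fin_cons (n := n) (d := dρ)]
    simp only [Finset.sum_mul, Finset.smul_sum]
    rw [Finset.sum_comm]
    refine Finset.sum_congr rfl fun k' _ => ?_
    rw [Finset.sum_comm]
    refine Finset.sum_congr rfl fun i' _ => ?_
    refine Finset.sum_congr rfl fun c _ => ?_
    refine Finset.sum_congr rfl fun a' _ => ?_
    rw [Fin.prod_univ_succ (n := n + 1), ← Fin.cons_snoc_eq_snoc_cons, smul_mul_assoc, smul_smul]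
    rfl

/-- **Eq. (3) of the paper.** The triangular 2D tensor network built from the
gate `U^{(i,a)}_{(b,j)} = ρ(v_{ij})_{ab}` equals the matrix product operator with bond
space `A`: for every `n ≥ 1` (here `n+1` with `n : ℕ`) and all index tuples,
`[U△^{(n)}]^{i,a}_{b,j} = ε(G^ρ_{a₁b₁}(G^v_{i₁j₁}(⋯ G^ρ_{aₙbₙ}(G^v_{iₙjₙ}(1))⋯)))`. -/
theorem triangle_network_eq_mpo
    {A : Type*} [Ring A] [Bialgebra ℂ A] {dρ dv : ℕ}
    (ρ : A →ₐ[ℂ] Matrix (Fin dρ) (Fin dρ) ℂ) (v : Fin dv → Fin dv → A)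
    (hvΔ : ∀ i j, Coalgebra.comul (R := ℂ) (v i j) = ∑ k, v i k ⊗ₜ[ℂ] v k j)
    (hvε : ∀ i j, Coalgebra.counit (R := ℂ) (v i j) = if i = j then (1 : ℂ) else 0)
    (n : ℕ) (i : Fin (n + 1) → Fin dv) (a : Fin (n + 1) → Fin dρ)
    (b : Fin (n + 1) → Fin dρ) (j : Fin (n + 1) → Fin dv) :
    triangleNetwork ρ v n i a b j =
      Coalgebra.counit (R := ℂ) (mpoWord ρ v (n + 1) i a b j) := by
  induction n with
  | zero =>
    rw [mpoWord_peel ρ v hvΔ]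
    simp [triangleNetwork, mpoWord, hvε, Fin.snoc]
  | succ n ih =>
    rw [mpoWord_peel ρ v hvΔ, triangleNetwork]
    simp only [ih, map_sum, map_smul, Bialgebra.counit_mul, hvε, smul_eq_mul]
    rw [Finset.sum_eq_single (i 0)]
    · simp [mul_comm]
    · intro k _ hk
      simp [Ne.symm hk]
    · simp
end

section
/- (Key commutation identity, Eq. (53) of the paper.) Let A be a weak bialgebra over ℂ. Then for all z, w ∈ A the following identities hold in A ⊗ A: (i) Σ z₍₁₎·ε(1₍₁₎·z₍₂₎) ⊗ w·1₍₂₎ = Σ 1₍₁₎·z ⊗ w·1₍₂₎; and (ii) Σ 1₍₁'₎·z₍₁₎·ε(1₍₁₎·z₍₂₎) ⊗ w₍₂₎·1₍₂₎·ε(w₍₁₎·1₍₂'₎) = Σ 1₍₁₎·z ⊗ w·1₍₂₎; where Δ(1) = Σ 1₍₁₎ ⊗ 1₍₂₎ = Σ 1₍₁'₎ ⊗ 1₍₂'₎ are two independent Sweedler expansions of Δ(1), and Δ(z) = Σ z₍₁₎ ⊗ z₍₂₎, Δ(w) = Σ w₍₁₎ ⊗ w₍₂₎. -/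
open scoped TensorProduct

section WeakBialgebra

variable {A : Type*} [Ring A] [Algebra ℂ A] [Coalgebra ℂ A]

/-- The target counital map `ε_t : A →ₗ A`, `ε_t(y) = Σ ε(1₍₁₎·y)·1₍₂₎`. -/
noncomputable def epsTL : A →ₗ[ℂ] A :=
  (TensorProduct.lid ℂ A).toLinearMap ∘ₗ
    (TensorProduct.map (Coalgebra.counit (R := ℂ)) LinearMap.id) ∘ₗ
      (LinearMap.mulLeft ℂ (Coalgebra.comul (R := ℂ) (1 : A))) ∘ₗ
        ((TensorProduct.mk ℂ A A).flip (1 : A))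

/-- The source counital map `ε_s : A →ₗ A`, `ε_s(x) = Σ 1₍₁₎·ε(x·1₍₂₎)`. -/
noncomputable def epsSL : A →ₗ[ℂ] A :=
  (TensorProduct.rid ℂ A).toLinearMap ∘ₗ
    (TensorProduct.map LinearMap.id (Coalgebra.counit (R := ℂ))) ∘ₗ
      (LinearMap.mulRight ℂ (Coalgebra.comul (R := ℂ) (1 : A))) ∘ₗ
        (TensorProduct.mk ℂ A A (1 : A))

end WeakBialgebra

section Helpers

variable {A : Type*} [Ring A] [Algebra ℂ A] [Coalgebra ℂ A]

/-- `id ⊗ ε ⊗ id` on `(A ⊗ A) ⊗ A`. -/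
noncomputable def midEps : (A ⊗[ℂ] A) ⊗[ℂ] A →ₗ[ℂ] A ⊗[ℂ] A :=
  TensorProduct.map ((TensorProduct.rid ℂ A).toLinearMap ∘ₗ
    TensorProduct.map LinearMap.id (Coalgebra.counit (R := ℂ))) LinearMap.id

lemma midEps_comul (a b : A) :
    midEps (Coalgebra.comul (R := ℂ) a ⊗ₜ[ℂ] b) = a ⊗ₜ[ℂ] b := by
  have := Coalgebra.lTensor_counit_comul (R := ℂ) a
  rw [LinearMap.lTensor] at this
  simp [midEps, this]

lemma midEps_assoc_comul (a b : A) :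
    midEps ((TensorProduct.assoc ℂ A A A).symm (a ⊗ₜ[ℂ] Coalgebra.comul (R := ℂ) b))
      = a ⊗ₜ[ℂ] b := by
  have key : ∀ t : A ⊗[ℂ] A, midEps ((TensorProduct.assoc ℂ A A A).symm (a ⊗ₜ[ℂ] t))
      = a ⊗ₜ[ℂ] (TensorProduct.lid ℂ A ((Coalgebra.counit (R := ℂ)).rTensor A t)) := by
    intro t
    induction t with
    | zero => simp
    | add x y hx hy => simp only [TensorProduct.tmul_add, map_add, hx, hy]
    | tmul p q => simp [midEps, TensorProduct.smul_tmul]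
  rw [key, Coalgebra.rTensor_counit_comul]
  simp

lemma midEps_left
    (hmul : ∀ x y : A,
      Coalgebra.comul (R := ℂ) (x * y) = Coalgebra.comul (R := ℂ) x * Coalgebra.comul (R := ℂ) y)
    (z : A) (t : A ⊗[ℂ] A) :
    midEps ((TensorProduct.map (Coalgebra.comul (R := ℂ)) LinearMap.id) t *
      (Coalgebra.comul (R := ℂ) z ⊗ₜ[ℂ] (1 : A))) =
    TensorProduct.map (LinearMap.mulRight ℂ z) LinearMap.id t := by
  induction t with
  | zero => simp
  | add x y hx hy => simp only [map_add, add_mul, hx, hy]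
  | tmul p q => simp [← hmul, midEps_comul]

lemma assoc_symm_mul' (x y : A ⊗[ℂ] (A ⊗[ℂ] A)) :
    (TensorProduct.assoc ℂ A A A).symm x * (TensorProduct.assoc ℂ A A A).symm y =
      (TensorProduct.assoc ℂ A A A).symm (x * y) :=
  (map_mul (Algebra.TensorProduct.assoc ℂ ℂ ℂ A A A).symm x y).symm

lemma midEps_right
    (hmul : ∀ x y : A,
      Coalgebra.comul (R := ℂ) (x * y) = Coalgebra.comul (R := ℂ) x * Coalgebra.comul (R := ℂ) y)
    (w : A) (t : A ⊗[ℂ] A) :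
    midEps ((TensorProduct.assoc ℂ A A A).symm ((1 : A) ⊗ₜ[ℂ] Coalgebra.comul (R := ℂ) w) *
      (TensorProduct.assoc ℂ A A A).symm
        ((TensorProduct.map LinearMap.id (Coalgebra.comul (R := ℂ))) t)) =
    TensorProduct.map LinearMap.id (LinearMap.mulLeft ℂ w) t := by
  induction t with
  | zero => simp
  | add x y hx hy => simp only [map_add, mul_add, hx, hy]
  | tmul p q =>
    rw [TensorProduct.map_tmul, assoc_symm_mul', Algebra.TensorProduct.tmul_mul_tmul, ← hmul,
      midEps_assoc_comul]
    simp

lemma midEps_mixed (s t : A ⊗[ℂ] A) :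
    midEps ((TensorProduct.assoc ℂ A A A).symm ((1 : A) ⊗ₜ[ℂ] t) * (s ⊗ₜ[ℂ] (1 : A))) =
    TensorProduct.map LinearMap.id ((TensorProduct.lid ℂ A).toLinearMap ∘ₗ
    (TensorProduct.map (Coalgebra.counit (R := ℂ)) LinearMap.id) ∘ₗ
      (LinearMap.mulLeft ℂ t) ∘ₗ
        ((TensorProduct.mk ℂ A A).flip (1 : A))) s := by
  induction s with
  | zero => simp
  | add x y hx hy => simp only [map_add, mul_add, TensorProduct.add_tmul, hx, hy]
  | tmul p q =>
    induction t with
    | zero => simp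
    | add x y hx hy =>
      simp only [map_add, add_mul, TensorProduct.tmul_add, hx, hy]
      simp [add_mul, TensorProduct.tmul_add]
    | tmul a b => simp [midEps, TensorProduct.smul_tmul]

lemma midEps_mixed2 (s t : A ⊗[ℂ] A) :
    midEps ((TensorProduct.assoc ℂ A A A).symm ((1 : A) ⊗ₜ[ℂ] s) * (t ⊗ₜ[ℂ] (1 : A))) =
    TensorProduct.map ((TensorProduct.rid ℂ A).toLinearMap ∘ₗ
    (TensorProduct.map LinearMap.id (Coalgebra.counit (R := ℂ))) ∘ₗ
      (LinearMap.mulRight ℂ t) ∘ₗ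
        (TensorProduct.mk ℂ A A (1 : A))) LinearMap.id s := by
  induction s with
  | zero => simp
  | add x y hx hy => simp only [map_add, add_mul, TensorProduct.tmul_add, hx, hy]
  | tmul p q =>
    induction t with
    | zero => simp
    | add x y hx hy =>
      simp only [map_add, mul_add, TensorProduct.add_tmul, hx, hy]
      simp [mul_add, TensorProduct.add_tmul]
    | tmul a b => simp [midEps, TensorProduct.smul_tmul]

lemma final_mul (z w : A) (s t : A ⊗[ℂ] A) :
    TensorProduct.map LinearMap.id (LinearMap.mulLeft ℂ w) s *
      TensorProduct.map (LinearMap.mulRight ℂ z) LinearMap.id t =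
    TensorProduct.map (LinearMap.mulRight ℂ z) (LinearMap.mulLeft ℂ w) (s * t) := by
  induction s with
  | zero => simp
  | add x y hx hy => simp only [map_add, add_mul, hx, hy]
  | tmul p q =>
    induction t with
    | zero => simp
    | add x y hx hy => simp only [map_add, mul_add, hx, hy]
    | tmul a b => simp [mul_assoc]

end Helpers

/-- **Key commutation identity, Eq. (53) of the paper.**
Let `A` be a weak bialgebra over `ℂ`.  Then for all `z, w ∈ A`, in `A ⊗ A`:
(i) `Σ z₍₁₎·ε(1₍₁₎·z₍₂₎) ⊗ w·1₍₂₎ = Σ 1₍₁₎·z ⊗ w·1₍₂₎`, encoded as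
    `(id ⊗ (w·ε_t(−)))(Δz) = ((−·z) ⊗ (w·−))(Δ1)`; and
(ii) `Σ 1₍₁'₎·z₍₁₎·ε(1₍₁₎·z₍₂₎) ⊗ w₍₂₎·1₍₂₎·ε(w₍₁₎·1₍₂'₎) = Σ 1₍₁₎·z ⊗ w·1₍₂₎`,
    encoded as `((ε_s ⊗ id)(Δw)) · ((id ⊗ ε_t)(Δz)) = ((−·z) ⊗ (w·−))(Δ1)`. -/
theorem weak_bialgebra_key_commutation
    {A : Type*} [Ring A] [Algebra ℂ A] [Coalgebra ℂ A]
    -- prebialgebra: comultiplication is multiplicative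
    (hmul : ∀ x y : A,
      Coalgebra.comul (R := ℂ) (x * y) = Coalgebra.comul (R := ℂ) x * Coalgebra.comul (R := ℂ) y)
    -- weak unit axiom
    (hwu1 : (TensorProduct.map (Coalgebra.comul (R := ℂ)) LinearMap.id)
        (Coalgebra.comul (R := ℂ) (1 : A)) =
      (Coalgebra.comul (R := ℂ) (1 : A) ⊗ₜ[ℂ] (1 : A)) *
        ((TensorProduct.assoc ℂ A A A).symm ((1 : A) ⊗ₜ[ℂ] Coalgebra.comul (R := ℂ) (1 : A))))
    (hwu2 : (TensorProduct.map (Coalgebra.comul (R := ℂ)) LinearMap.id)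
        (Coalgebra.comul (R := ℂ) (1 : A)) =
      ((TensorProduct.assoc ℂ A A A).symm ((1 : A) ⊗ₜ[ℂ] Coalgebra.comul (R := ℂ) (1 : A))) *
        (Coalgebra.comul (R := ℂ) (1 : A) ⊗ₜ[ℂ] (1 : A)))
    -- weak counit axiom
    (hwc1 : ∀ x y z : A,
      Coalgebra.counit (R := ℂ) (x * y * z) =
        (LinearMap.mul' ℂ ℂ ∘ₗ TensorProduct.map
            (Coalgebra.counit (R := ℂ) ∘ₗ LinearMap.mulLeft ℂ x)
            (Coalgebra.counit (R := ℂ) ∘ₗ LinearMap.mulRight ℂ z))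
          (Coalgebra.comul (R := ℂ) y))
    (hwc2 : ∀ x y z : A,
      Coalgebra.counit (R := ℂ) (x * y * z) =
        (LinearMap.mul' ℂ ℂ ∘ₗ TensorProduct.map
            (Coalgebra.counit (R := ℂ) ∘ₗ LinearMap.mulRight ℂ z)
            (Coalgebra.counit (R := ℂ) ∘ₗ LinearMap.mulLeft ℂ x))
          (Coalgebra.comul (R := ℂ) y))
    (z w : A) :
    (TensorProduct.map LinearMap.id (LinearMap.mulLeft ℂ w ∘ₗ epsTL))
        (Coalgebra.comul (R := ℂ) z) =
      (TensorProduct.map (LinearMap.mulRight ℂ z) (LinearMap.mulLeft ℂ w))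
        (Coalgebra.comul (R := ℂ) (1 : A)) ∧
    ((TensorProduct.map epsSL LinearMap.id) (Coalgebra.comul (R := ℂ) w)) *
        ((TensorProduct.map LinearMap.id epsTL) (Coalgebra.comul (R := ℂ) z)) =
      (TensorProduct.map (LinearMap.mulRight ℂ z) (LinearMap.mulLeft ℂ w))
        (Coalgebra.comul (R := ℂ) (1 : A)) := by
  have hd1 : Coalgebra.comul (R := ℂ) (1 : A) * Coalgebra.comul (R := ℂ) (1 : A) =
      Coalgebra.comul (R := ℂ) (1 : A) := by rw [← hmul, one_mul]
  have T : (TensorProduct.map LinearMap.id epsTL) (Coalgebra.comul (R := ℂ) z) =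
      TensorProduct.map (LinearMap.mulRight ℂ z) LinearMap.id
        (Coalgebra.comul (R := ℂ) (1 : A)) := by
    rw [← midEps_left hmul, hwu2, mul_assoc, Algebra.TensorProduct.tmul_mul_tmul, ← hmul,
      one_mul, one_mul, midEps_mixed]
    rfl
  have S : (TensorProduct.map epsSL LinearMap.id) (Coalgebra.comul (R := ℂ) w) =
      TensorProduct.map LinearMap.id (LinearMap.mulLeft ℂ w)
        (Coalgebra.comul (R := ℂ) (1 : A)) := by
    have hco : (TensorProduct.assoc ℂ A A A).symm
        ((TensorProduct.map LinearMap.id (Coalgebra.comul (R := ℂ)))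
          (Coalgebra.comul (R := ℂ) (1 : A))) =
        (TensorProduct.map (Coalgebra.comul (R := ℂ)) LinearMap.id)
          (Coalgebra.comul (R := ℂ) (1 : A)) :=
      Coalgebra.coassoc_symm_apply (R := ℂ) (1 : A)
    rw [← midEps_right hmul, hco, hwu2, ← mul_assoc, assoc_symm_mul',
      Algebra.TensorProduct.tmul_mul_tmul, ← hmul, mul_one, mul_one, midEps_mixed2]
    rfl
  constructor
  · have : TensorProduct.map (LinearMap.id (R := ℂ) (M := A)) (LinearMap.mulLeft ℂ w ∘ₗ epsTL) =
        TensorProduct.map (LinearMap.id (R := ℂ) (M := A)) (LinearMap.mulLeft ℂ w) ∘ₗ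
          TensorProduct.map (LinearMap.id (R := ℂ) (M := A)) (epsTL (A := A)) := by
      rw [← TensorProduct.map_comp, LinearMap.id_comp]
    rw [this, LinearMap.comp_apply, T, ← LinearMap.comp_apply, ← TensorProduct.map_comp,
      LinearMap.id_comp, LinearMap.comp_id]
  · rw [S, T, final_mul, hd1]
end

section
/- (Finite group solvable tensors, Sec. IV.A of the paper.) Let G be a finite group, ρ : G → GL_d(ℂ) a group homomorphism into d×d invertible complex matrices, and g₁,…,g_d ∈ G arbitrary elements. Define tensors with horizontal indices x,y ∈ G and vertical indices a,b,i,j ∈ {1,…,d}: R[y|x; a,b] := δ_{x,y}·ρ(x)_{ab}; V[y|x; i,j] := δ_{i,j}·δ_{y, x·g_i}; η[x] := δ_{x,1}; ξ[x] := 1; and gate entries U^{(i,a)}_{(b,j)} := δ_{i,j}·ρ(g_i)_{ab}. Then these tensors satisfy all four relations of Eq. (1): (1) Σ_{z∈G} R[y|z; a,b]·V[z|x; i,j] = Σ_{z∈G} Σ_{k=1}^{d} Σ_{c=1}^{d} V[y|z; i,k]·R[z|x; a,c]·U^{(k,c)}_{(b,j)} for all x,y ∈ G and all a,b,i,j; (2)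 Σ_{y∈G} ξ[y]·V[y|x; i,j] = δ_{i,j}·ξ[x]; (3) Σ_{x∈G} R[y|x; a,b]·η[x] = δ_{a,b}·η[y]; (4) Σ_{x∈G} ξ[x]·η[x] = 1. -/
/-- The tensor `R[y|x; a,b] = δ_{x,y}·ρ(x)_{ab}` built from a matrix representation of a
finite group. -/
noncomputable def Rtensor {G : Type*} [Group G] [DecidableEq G] {d : ℕ}
    (ρ : G →* (Matrix (Fin d) (Fin d) ℂ)ˣ) (y x : G) (a b : Fin d) : ℂ :=
  if x = y then (ρ x).val a b else 0

/-- The tensor `V[y|x; i,j] = δ_{i,j}·δ_{y, x·g_i}`. -/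
def Vtensor {G : Type*} [Group G] [DecidableEq G] {d : ℕ}
    (g : Fin d → G) (y x : G) (i j : Fin d) : ℂ :=
  (if i = j then 1 else 0) * (if y = x * g i then 1 else 0)

/-- The tensor `η[x] = δ_{x,1}`. -/
def etaTensor {G : Type*} [Group G] [DecidableEq G] (x : G) : ℂ :=
  if x = 1 then 1 else 0

/-- The tensor `ξ[x] = 1`. -/
def xiTensor {G : Type*} (_ : G) : ℂ := 1

/-- The gate entries `U^{(i,a)}_{(b,j)} = δ_{i,j}·ρ(g_i)_{ab}`. -/
noncomputable def Ugroup {G : Type*} [Group G] {d : ℕ}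
    (ρ : G →* (Matrix (Fin d) (Fin d) ℂ)ˣ) (g : Fin d → G)
    (i : Fin d) (a b : Fin d) (j : Fin d) : ℂ :=
  (if i = j then 1 else 0) * (ρ (g i)).val a b

/-- **Finite group solvable tensors, Sec. IV.A of the paper.**
For any finite group `G`, matrix representation `ρ : G →* GL_d(ℂ)` and elements
`g₁, …, g_d ∈ G`, the tensors `R`, `V`, `η`, `ξ` and the gate `U` satisfy the four
relations of Eq. (1) of the paper. -/
theorem finite_group_solvable_tensors
    {G : Type*} [Group G] [Fintype G] [DecidableEq G] {d : ℕ}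
    (ρ : G →* (Matrix (Fin d) (Fin d) ℂ)ˣ) (g : Fin d → G) :
    (∀ (x y : G) (a b i j : Fin d),
        ∑ z : G, Rtensor ρ y z a b * Vtensor g z x i j =
          ∑ z : G, ∑ k : Fin d, ∑ c : Fin d,
            Vtensor g y z i k * Rtensor ρ z x a c * Ugroup ρ g k c b j) ∧
    (∀ (x : G) (i j : Fin d),
        ∑ y : G, xiTensor y * Vtensor g y x i j =
          (if i = j then 1 else 0) * xiTensor x) ∧
    (∀ (y : G) (a b : Fin d),
        ∑ x : G, Rtensor ρ y x a b * etaTensor x =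
          (if a = b then 1 else 0) * etaTensor y) ∧
    (∑ x : G, xiTensor x * etaTensor x = 1) := by
  refine ⟨?_, ?_, ?_, ?_⟩
  · intro x y a b i j
    have hL : ∑ z : G, Rtensor ρ y z a b * Vtensor g z x i j =
        Rtensor ρ y (x * g i) a b * Vtensor g (x * g i) x i j := by
      apply Finset.sum_eq_single
      · intro z _ hz
        simp [Vtensor, hz]
      · simp
    have hR : ∑ z : G, ∑ k : Fin d, ∑ c : Fin d,
            Vtensor g y z i k * Rtensor ρ z x a c * Ugroup ρ g k c b j =
        ∑ c : Fin d, Vtensor g y x i i * Rtensor ρ x x a c * Ugroup ρ g i c b j := by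
      rw [Finset.sum_eq_single x, Finset.sum_eq_single i]
      · intro k _ hk
        simp [Vtensor, Ne.symm hk]
      · simp
      · intro z _ hz
        simp [Rtensor, Ne.symm hz]
      · simp
    rw [hL, hR]
    by_cases hij : i = j
    · by_cases hy : y = x * g i
      · subst hij
        subst hy
        simp [Rtensor, Vtensor, Ugroup, Matrix.mul_apply]
      · simp [Rtensor, Vtensor, hy, Ne.symm hy]
    · simp [Vtensor, Ugroup, hij]
  · intro x i j
    simp [xiTensor, Vtensor]
  · intro y a b
    by_cases hy : y = 1
    · subst hy
      simp [Rtensor, etaTensor, Matrix.one_apply]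
    · simp [Rtensor, etaTensor, hy, Ne.symm hy]
  · simp [xiTensor, etaTensor]
end

section
/- (Commutation relations Eq. (31) of the paper for the Fibonacci model.) Let ζ be the unique positive real root of z⁴ + z² = 1, let U be the 9×9 unitary on ℂ³ ⊗ ℂ³ determined by U|3,3⟩ = ζ|2,1⟩ − ζ²|3,3⟩, U|2,1⟩ = ζ²|2,1⟩ + ζ|3,3⟩, U|a,b⟩ = |a,b⟩ otherwise, and let P be the orthogonal projection of ℂ³ ⊗ ℂ³ onto the span of {|2,1⟩, |3,3⟩, |1,2⟩, |1,3⟩, |3,2⟩}. Then on ℂ³ ⊗ ℂ³ ⊗ ℂ³ (with 1 the identity on ℂ³ and ⊗ the Kronecker product): (P⊗1)(1⊗P) = (1⊗P)(P⊗1), (P⊗1)(1⊗U) = (1⊗U)(P⊗1), and (1⊗P)(U⊗1) = (U⊗1)(1⊗P). -/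
open Matrix

/-- The Fibonacci two-qutrit gate of Eq. (29), in the basis `|a,b⟩`, `a, b ∈ {1,2,3}`
(encoded by `Fin 3` with `0 ↔ 1`, `1 ↔ 2`, `2 ↔ 3`). -/
noncomputable def fibGate (ζ : ℝ) : Matrix (Fin 3 × Fin 3) (Fin 3 × Fin 3) ℂ :=
  Matrix.of fun p q =>
    if q = ((1 : Fin 3), (0 : Fin 3)) then
      (if p = ((1 : Fin 3), (0 : Fin 3)) then ((ζ : ℂ)) ^ 2
       else if p = ((2 : Fin 3), (2 : Fin 3)) then (ζ : ℂ) else 0)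
    else if q = ((2 : Fin 3), (2 : Fin 3)) then
      (if p = ((1 : Fin 3), (0 : Fin 3)) then (ζ : ℂ)
       else if p = ((2 : Fin 3), (2 : Fin 3)) then -((ζ : ℂ) ^ 2) else 0)
    else (if p = q then 1 else 0)

/-- The orthogonal projection `P` of `ℂ³ ⊗ ℂ³` onto the span of
`{|2,1⟩, |3,3⟩, |1,2⟩, |1,3⟩, |3,2⟩}` (with states `1,2,3` encoded as `0,1,2 : Fin 3`). -/
noncomputable def fibProj : Matrix (Fin 3 × Fin 3) (Fin 3 × Fin 3) ℂ :=
  Matrix.of fun p q =>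
    if p = q ∧ (p = ((1 : Fin 3), (0 : Fin 3)) ∨ p = ((2 : Fin 3), (2 : Fin 3)) ∨
        p = ((0 : Fin 3), (1 : Fin 3)) ∨ p = ((0 : Fin 3), (2 : Fin 3)) ∨
        p = ((2 : Fin 3), (1 : Fin 3))) then 1 else 0

/-- `M ⊗ 1` acting on the first two factors of `ℂ³ ⊗ ℂ³ ⊗ ℂ³` (Kronecker product with the
identity on the third factor). -/
def op12 (M : Matrix (Fin 3 × Fin 3) (Fin 3 × Fin 3) ℂ) :
    Matrix (Fin 3 × Fin 3 × Fin 3) (Fin 3 × Fin 3 × Fin 3) ℂ :=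
  Matrix.of fun p q => M (p.1, p.2.1) (q.1, q.2.1) * (if p.2.2 = q.2.2 then 1 else 0)

/-- `1 ⊗ M` acting on the last two factors of `ℂ³ ⊗ ℂ³ ⊗ ℂ³` (Kronecker product of the
identity on the first factor with `M`). -/
def op23 (M : Matrix (Fin 3 × Fin 3) (Fin 3 × Fin 3) ℂ) :
    Matrix (Fin 3 × Fin 3 × Fin 3) (Fin 3 × Fin 3 × Fin 3) ℂ :=
  Matrix.of fun p q => (if p.1 = q.1 then 1 else 0) * M (p.2.1, p.2.2) (q.2.1, q.2.2)

/-- The set of pairs onto which `fibProj` projects. -/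
def fibSupp (p : Fin 3 × Fin 3) : Prop :=
  p = (1, 0) ∨ p = (2, 2) ∨ p = (0, 1) ∨ p = (0, 2) ∨ p = (2, 1)

instance (p : Fin 3 × Fin 3) : Decidable (fibSupp p) := by
  unfold fibSupp; infer_instance

lemma op12_fibProj : op12 fibProj =
    Matrix.diagonal (fun p => if fibSupp (p.1, p.2.1) then (1 : ℂ) else 0) := by
  ext ⟨a, b, c⟩ ⟨a₂, b₂, c₂⟩
  simp only [op12, fibProj, Matrix.of_apply, Matrix.diagonal_apply, Prod.mk.injEq, fibSupp]
  by_cases h1 : a = a₂ <;> by_cases h2 : b = b₂ <;> by_cases h3 : c = c₂ <;> simp [h1, h2, h3]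

lemma op23_fibProj : op23 fibProj =
    Matrix.diagonal (fun p => if fibSupp (p.2.1, p.2.2) then (1 : ℂ) else 0) := by
  ext ⟨a, b, c⟩ ⟨a₂, b₂, c₂⟩
  simp only [op23, fibProj, Matrix.of_apply, Matrix.diagonal_apply, Prod.mk.injEq, fibSupp]
  by_cases h1 : a = a₂ <;> by_cases h2 : b = b₂ <;> by_cases h3 : c = c₂ <;> simp [h1, h2, h3]

/-- The gate only connects equal pairs, or the pairs `(2,1)` and `(3,3)`. -/
lemma fibGate_cases (ζ : ℝ) (p q : Fin 3 × Fin 3) :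
    fibGate ζ p q = 0 ∨ p = q ∨ ((p = (1, 0) ∨ p = (2, 2)) ∧ (q = (1, 0) ∨ q = (2, 2))) := by
  simp only [fibGate, Matrix.of_apply]
  split_ifs <;> simp_all

lemma fibSupp_left : ∀ a : Fin 3, ∀ p q : Fin 3 × Fin 3,
    (p = q ∨ ((p = (1, 0) ∨ p = (2, 2)) ∧ (q = (1, 0) ∨ q = (2, 2)))) →
    (fibSupp (a, p.1) ↔ fibSupp (a, q.1)) := by
  unfold fibSupp
  decide

lemma fibSupp_right : ∀ c : Fin 3, ∀ p q : Fin 3 × Fin 3,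
    (p = q ∨ ((p = (1, 0) ∨ p = (2, 2)) ∧ (q = (1, 0) ∨ q = (2, 2)))) →
    (fibSupp (p.2, c) ↔ fibSupp (q.2, c)) := by
  unfold fibSupp
  decide

/-- **Commutation relations Eq. (31) for the Fibonacci model.**
With `U` the Fibonacci gate and `P` the projection onto
`span{|2,1⟩, |3,3⟩, |1,2⟩, |1,3⟩, |3,2⟩}`, on `ℂ³ ⊗ ℂ³ ⊗ ℂ³` we have
`(P⊗1)(1⊗P) = (1⊗P)(P⊗1)`, `(P⊗1)(1⊗U) = (1⊗U)(P⊗1)` and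
`(1⊗P)(U⊗1) = (U⊗1)(1⊗P)`. -/
theorem fib_commutation_relations (ζ : ℝ) (hpos : 0 < ζ) (hroot : ζ ^ 4 + ζ ^ 2 = 1) :
    op12 fibProj * op23 fibProj = op23 fibProj * op12 fibProj ∧
    op12 fibProj * op23 (fibGate ζ) = op23 (fibGate ζ) * op12 fibProj ∧
    op23 fibProj * op12 (fibGate ζ) = op12 (fibGate ζ) * op23 fibProj := by
  refine ⟨?_, ?_, ?_⟩
  · rw [op12_fibProj, op23_fibProj, Matrix.diagonal_mul_diagonal, Matrix.diagonal_mul_diagonal]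
    simp only [mul_comm]
  · rw [op12_fibProj]
    ext ⟨a, b, c⟩ ⟨a₂, b₂, c₂⟩
    rw [Matrix.diagonal_mul, Matrix.mul_diagonal, mul_comm]
    simp only [op23, Matrix.of_apply]
    by_cases ha : a = a₂
    · subst ha
      rcases fibGate_cases ζ (b, c) (b₂, c₂) with h | h
      · simp [h]
      · simp only [fibSupp_left a _ _ h]
    · simp [ha]
  · rw [op23_fibProj]
    ext ⟨a, b, c⟩ ⟨a₂, b₂, c₂⟩
    rw [Matrix.diagonal_mul, Matrix.mul_diagonal, mul_comm]
    simp only [op12, Matrix.of_apply]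
    by_cases hc : c = c₂
    · subst hc
      rcases fibGate_cases ζ (a, b) (a₂, b₂) with h | h
      · simp [h]
      · simp only [fibSupp_right c _ _ h]
    · simp [hc]
end

section
/- (Dimension of the solvable subspace of the Fibonacci model.) Let S = {(2,1),(3,3),(1,2),(1,3),(3,2)} ⊂ {1,2,3}². For every N ≥ 1, the number of functions w : {1,…,N} → {1,2,3} such that (w(i), w(i+1)) ∈ S for all 1 ≤ i ≤ N−1 equals F_{N+3}, where F denotes the Fibonacci sequence. (Equivalently, the dimension of the common +1 eigenspace of the projectors P acting on all neighboring pairs of an N-site open qutrit chain is D_N = F_{N+3}.) -/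
/-- Admissible words of length `n + 1`. -/
def FibAdm (n : ℕ) (w : Fin (n + 1) → ℕ) : Prop :=
  (∀ i, 1 ≤ w i ∧ w i ≤ 3) ∧
      (∀ (i : Fin (n + 1)) (h : (i : ℕ) + 1 < n + 1),
        (w i, w ⟨(i : ℕ) + 1, h⟩) ∈
          ({(2, 1), (3, 3), (1, 2), (1, 3), (3, 2)} : Set (ℕ × ℕ)))

/-- Admissible words of length `n + 1` starting with `a`. -/
def FibStart (n a : ℕ) : Set (Fin (n + 1) → ℕ) := {w | w 0 = a ∧ FibAdm n w}

lemma fibAdm_cons (n a : ℕ) (v : Fin (n + 1) → ℕ) :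
    FibAdm (n + 1) (Fin.cons a v : Fin (n + 2) → ℕ) ↔
      (1 ≤ a ∧ a ≤ 3) ∧
      (a, v 0) ∈ ({(2, 1), (3, 3), (1, 2), (1, 3), (3, 2)} : Set (ℕ × ℕ)) ∧ FibAdm n v := by
  constructor
  · rintro ⟨h1, h2⟩
    refine ⟨h1 0, h2 0 (by simp), fun i => h1 i.succ, fun i h => ?_⟩
    exact h2 i.succ (by simpa using h)
  · rintro ⟨h1, h2, h3, h4⟩
    refine ⟨fun i => ?_, fun i => ?_⟩
    · refine Fin.cases h1 (fun j => h3 j) i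
    · refine Fin.cases (fun _ => h2) (fun j h => ?_) i
      exact h4 j (by simpa using h)

lemma fibAdm_start {n : ℕ} {v : Fin (n + 1) → ℕ} (h : FibAdm n v) :
    v 0 = 1 ∨ v 0 = 2 ∨ v 0 = 3 := by
  have := h.1 0
  omega

lemma fibStart_succ (n a : ℕ) (T : Set (Fin (n + 1) → ℕ))
    (hT : ∀ v, v ∈ T ↔ (1 ≤ a ∧ a ≤ 3) ∧
      (a, v 0) ∈ ({(2, 1), (3, 3), (1, 2), (1, 3), (3, 2)} : Set (ℕ × ℕ)) ∧ FibAdm n v) :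
    FibStart (n + 1) a = (fun v => (Fin.cons a v : Fin (n + 2) → ℕ)) '' T := by
  ext w
  constructor
  · rintro ⟨h0, h⟩
    have e : (Fin.cons a (Fin.tail w) : Fin (n + 2) → ℕ) = w := by
      rw [← h0]; exact Fin.cons_self_tail w
    refine ⟨Fin.tail w, ?_, e⟩
    rw [hT, ← fibAdm_cons, e]
    exact h
  · rintro ⟨v, hv, rfl⟩
    exact ⟨rfl, (fibAdm_cons n a v).2 ((hT v).1 hv)⟩

lemma fibStart_disjoint (n : ℕ) {a b : ℕ} (h : a ≠ b) :
    Disjoint (FibStart n a) (FibStart n b) := by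
  rw [Set.disjoint_left]
  rintro w ⟨h1, _⟩ ⟨h2, _⟩
  exact h (h1.symm.trans h2)

lemma fibCons_inj (n a : ℕ) :
    Function.Injective (fun v : Fin (n + 1) → ℕ => (Fin.cons a v : Fin (n + 2) → ℕ)) :=
  Fin.cons_right_injective (α := fun _ => ℕ) a

lemma fibStart_zero (a : ℕ) (h : 1 ≤ a ∧ a ≤ 3) : FibStart 0 a = {fun _ => a} := by
  ext w
  constructor
  · rintro ⟨h0, _⟩
    funext i
    rw [show i = 0 from Fin.ext (by have := i.isLt; simp), h0]
  · rintro rfl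
    exact ⟨rfl, fun _ => h, fun i hi => absurd hi (by omega)⟩

lemma fibStart_card (n : ℕ) :
    ((FibStart n 1).Finite ∧ (FibStart n 2).Finite ∧ (FibStart n 3).Finite) ∧
    (FibStart n 1).ncard = Nat.fib (n + 2) ∧ (FibStart n 2).ncard = Nat.fib (n + 1) ∧
    (FibStart n 3).ncard = Nat.fib (n + 2) := by
  induction n with
  | zero =>
    rw [fibStart_zero 1 (by simp), fibStart_zero 2 (by simp), fibStart_zero 3 (by simp)]
    simp
  | succ n ih =>
    obtain ⟨⟨f1, f2, f3⟩, c1, c2, c3⟩ := ih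
    have e1 := fibStart_succ n 1 (FibStart n 2 ∪ FibStart n 3) (fun v => by
      simp [FibStart]; tauto)
    have e2 := fibStart_succ n 2 (FibStart n 1) (fun v => by
      simp [FibStart])
    have e3 := fibStart_succ n 3 (FibStart n 2 ∪ FibStart n 3) (fun v => by
      simp [FibStart]; tauto)
    have hu : (FibStart n 2 ∪ FibStart n 3).ncard = Nat.fib (n + 3) := by
      rw [Set.ncard_union_eq (fibStart_disjoint n (by decide)) f2 f3, c2, c3]
      exact Nat.fib_add_two.symm
    rw [e1, e2, e3]
    refine ⟨⟨(f2.union f3).image _, f1.image _, (f2.union f3).image _⟩, ?_, ?_, ?_⟩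
    · rw [Set.ncard_image_of_injective _ (fibCons_inj n 1), hu]
    · rw [Set.ncard_image_of_injective _ (fibCons_inj n 2), c1]
    · rw [Set.ncard_image_of_injective _ (fibCons_inj n 3), hu]

/-- **Dimension of the solvable subspace of the Fibonacci model.**
Let `S = {(2,1),(3,3),(1,2),(1,3),(3,2)} ⊂ {1,2,3}²`.  For every `N ≥ 1`, the number of
strings `w : {1,…,N} → {1,2,3}` all of whose adjacent pairs lie in `S` equals `F_{N+3}`,
the `(N+3)`-rd Fibonacci number. -/
theorem fib_solvable_subspace_dimension (N : ℕ) (hN : 1 ≤ N) :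
    Nat.card {w : Fin N → ℕ //
      (∀ i, 1 ≤ w i ∧ w i ≤ 3) ∧
      (∀ (i : Fin N) (h : (i : ℕ) + 1 < N),
        (w i, w ⟨(i : ℕ) + 1, h⟩) ∈
          ({(2, 1), (3, 3), (1, 2), (1, 3), (3, 2)} : Set (ℕ × ℕ)))} =
    Nat.fib (N + 3) := by
  obtain ⟨n, rfl⟩ : ∃ n, N = n + 1 := ⟨N - 1, by omega⟩
  obtain ⟨⟨f1, f2, f3⟩, c1, c2, c3⟩ := fibStart_card n
  change Nat.card {w : Fin (n + 1) → ℕ | FibAdm n w} = _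
  rw [Nat.card_coe_set_eq]
  have e : {w : Fin (n + 1) → ℕ | FibAdm n w} = FibStart n 1 ∪ (FibStart n 2 ∪ FibStart n 3) := by
    ext w
    have := @fibAdm_start n w
    simp only [FibStart, Set.mem_union, Set.mem_ofPred_eq]
    tauto
  rw [e, Set.ncard_union_eq _ f1 (f2.union f3),
    Set.ncard_union_eq (fibStart_disjoint n (by decide)) f2 f3, c1, c2, c3]
  · have h1 : Nat.fib (n + 3) = Nat.fib (n + 1) + Nat.fib (n + 2) := Nat.fib_add_two
    have h2 : Nat.fib (n + 1 + 3) = Nat.fib (n + 2) + Nat.fib (n + 3) := Nat.fib_add_two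
    omega
  · exact Set.disjoint_union_right.2
      ⟨fibStart_disjoint n (by decide), fibStart_disjoint n (by decide)⟩
end

section
/- (Qutrit–IRF correspondence, Sec. V.B.2 of the paper.) Call a list w of length N over the alphabet {1,2,3} tileable if it is a concatenation of blocks (2,1) and (3). For N ≥ 1, the map that assigns to a tileable list w of length N the string s of length N−1 over {I,τ} defined by s_j = I if (w_j, w_{j+1}) = (2,1) and s_j = τ otherwise, is a bijection from the set of tileable lists of length N onto the set of strings of length N−1 over {I,τ} containing no two consecutive I's. Consequently, the number of tileable lists of length N equals F_{N+1}. -/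
/-- A list over the alphabet `{1,2,3}` (as natural numbers) is *tileable* if it is a
concatenation of blocks `(2,1)` and `(3)`. -/
inductive Tileable : List ℕ → Prop
  | nil : Tileable []
  | three {w : List ℕ} : Tileable w → Tileable (3 :: w)
  | block {w : List ℕ} : Tileable w → Tileable (2 :: 1 :: w)

/-- The map assigning to a list `w` of length `N` the string of length `N−1` over
`{I, τ}` (encoded as `Bool`, with `true = I`) whose `j`-th letter is `I` exactly when
`(w_j, w_{j+1}) = (2,1)`. -/
def toIRF (w : List ℕ) : List Bool :=
  (w.zip w.tail).map fun p => decide (p = (2, 1))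

theorem toIRF_three (b : ℕ) (w : List ℕ) : toIRF (3 :: b :: w) = false :: toIRF (b :: w) := by
  simp [toIRF]

theorem toIRF_block (b : ℕ) (w : List ℕ) :
    toIRF (2 :: 1 :: b :: w) = true :: false :: toIRF (b :: w) := by
  simp [toIRF]

theorem toIRF_length (w : List ℕ) : (toIRF w).length = w.length - 1 := by
  simp [toIRF]

theorem toIRF_chain {w : List ℕ} (h : Tileable w) :
    List.IsChain (fun a b => ¬(a = true ∧ b = true)) (toIRF w) := by
  induction h with
  | nil => simp [toIRF]
  | @three w h ih =>
    cases w with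
    | nil => simp [toIRF]
    | cons b w =>
      rw [toIRF_three]
      rw [List.isChain_cons]
      exact ⟨by simp, ih⟩
  | @block w h ih =>
    cases w with
    | nil => simp [toIRF]
    | cons b w =>
      rw [toIRF_block]
      rw [List.isChain_cons, List.isChain_cons]
      exact ⟨by simp, by simp, ih⟩

theorem toIRF_inj {w : List ℕ} (h : Tileable w) :
    ∀ v, Tileable v → w.length = v.length → toIRF w = toIRF v → w = v := by
  induction h with
  | nil => intro v _ hl _; exact (List.length_eq_zero_iff.mp hl.symm).symm
  | @three w h ih =>
    intro v hv hl he
    cases hv with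
    | nil => simp at hl
    | @three v hv =>
      have hl' : w.length = v.length := by simpa using hl
      rw [ih v hv hl']
      cases w <;> cases v <;> simp_all [toIRF_three]
    | @block v hv =>
      exfalso
      cases w <;> simp_all [toIRF]
  | @block w h ih =>
    intro v hv hl he
    cases hv with
    | nil => simp at hl
    | @three v hv =>
      exfalso
      cases v <;> simp_all [toIRF]
    | @block v hv =>
      have hl' : w.length = v.length := by simpa using hl
      rw [ih v hv hl']
      cases w <;> cases v <;> simp_all [toIRF_block]

theorem toIRF_surj : ∀ s : List Bool, List.IsChain (fun a b => ¬(a = true ∧ b = true)) s →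
    ∃ w, Tileable w ∧ w.length = s.length + 1 ∧ toIRF w = s
  | [], _ => ⟨[3], .three .nil, rfl, rfl⟩
  | [true], _ => ⟨[2, 1], .block .nil, rfl, by simp [toIRF]⟩
  | false :: s, h => by
    obtain ⟨w, hw, hl, he⟩ := toIRF_surj s (List.isChain_cons.mp h).2
    refine ⟨3 :: w, .three hw, by simp [hl], ?_⟩
    cases w with
    | nil => simp at hl
    | cons b w => rw [toIRF_three, he]
  | true :: true :: s, h => by simp at h
  | true :: false :: s, h => by
    obtain ⟨w, hw, hl, he⟩ := toIRF_surj s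
      (List.isChain_cons.mp (List.isChain_cons.mp h).2).2
    refine ⟨2 :: 1 :: w, .block hw, by simp [hl], ?_⟩
    cases w with
    | nil => simp at hl
    | cons b w => rw [toIRF_block, he]

/-- The finite set of tileable lists of given length. -/
def tileSet : ℕ → Finset (List ℕ)
  | 0 => {[]}
  | 1 => {[3]}
  | n + 2 => (tileSet (n + 1)).image (fun w => 3 :: w) ∪
      (tileSet n).image (fun w => 2 :: 1 :: w)

theorem card_tileSet : ∀ n, (tileSet n).card = Nat.fib (n + 1)
  | 0 => rfl
  | 1 => rfl
  | n + 2 => by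
    rw [tileSet, Finset.card_union_of_disjoint, Finset.card_image_of_injective,
      Finset.card_image_of_injective, card_tileSet (n + 1), card_tileSet n,
      Nat.fib_add_two (n := n + 1), add_comm]
    · intro a b h; simpa using h
    · intro a b h; simpa using h
    · rw [Finset.disjoint_left]
      intro a ha hb
      simp only [Finset.mem_image] at ha hb
      obtain ⟨x, _, rfl⟩ := ha
      obtain ⟨y, _, h⟩ := hb
      simp at h

theorem mem_tileSet : ∀ n w, w ∈ tileSet n ↔ Tileable w ∧ w.length = n
  | 0, w => by
    simp only [tileSet, Finset.mem_singleton, List.length_eq_zero_iff]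
    exact ⟨fun h => ⟨h ▸ .nil, h⟩, fun h => h.2⟩
  | 1, w => by
    simp only [tileSet, Finset.mem_singleton]
    constructor
    · rintro rfl; exact ⟨.three .nil, rfl⟩
    · rintro ⟨h, hl⟩
      cases h <;> simp_all
  | n + 2, w => by
    simp only [tileSet, Finset.mem_union, Finset.mem_image, mem_tileSet (n + 1), mem_tileSet n]
    constructor
    · rintro (⟨v, ⟨hv, hl⟩, rfl⟩ | ⟨v, ⟨hv, hl⟩, rfl⟩)
      · exact ⟨.three hv, by simp [hl]⟩
      · exact ⟨.block hv, by simp [hl]⟩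
    · rintro ⟨h, hl⟩
      cases h with
      | nil => simp at hl
      | @three v hv => exact .inl ⟨v, ⟨hv, by simpa using hl⟩, rfl⟩
      | @block v hv => exact .inr ⟨v, ⟨hv, by simpa using hl⟩, rfl⟩

/-- **Qutrit–IRF correspondence, Sec. V.B.2 of the paper.**
For `N ≥ 1`, the map `toIRF` is a bijection from the set of tileable lists of length `N`
onto the set of strings of length `N−1` over `{I, τ}` with no two consecutive `I`'s
(the Rydberg constraint); consequently the number of tileable lists of length `N` is
`F_{N+1}`. -/
theorem tileable_irf_bijection (N : ℕ) (hN : 1 ≤ N) :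
    Set.BijOn toIRF {w : List ℕ | Tileable w ∧ w.length = N}
      {s : List Bool | s.length = N - 1 ∧
        List.Chain' (fun a b => ¬(a = true ∧ b = true)) s} ∧
    Nat.card {w : List ℕ // Tileable w ∧ w.length = N} = Nat.fib (N + 1) := by
  refine ⟨⟨?_, ?_, ?_⟩, ?_⟩
  · rintro w ⟨hw, hl⟩
    exact ⟨by rw [toIRF_length, hl], toIRF_chain hw⟩
  · rintro w ⟨hw, hl⟩ v ⟨hv, hl'⟩ he
    exact toIRF_inj hw v hv (hl.trans hl'.symm) he
  · rintro s ⟨hl, hs⟩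
    obtain ⟨w, hw, hlw, he⟩ := toIRF_surj s hs
    exact ⟨w, ⟨hw, by omega⟩, he⟩
  · exact Nat.subtype_card (tileSet N) (mem_tileSet N) |>.trans (card_tileSet N)
end
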